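/- For a ring R the following are equivalent: (1) the right R-module R_R is FP-injective; (2) the left R-module _RR is an FP-cogenerator; (3) there exists an fp-flat FP-cogenerator in the category of left R-modules; (4) there exists an fp-flat cogenerator in the category of left R-modules; (5) whenever α : M → N is a homomorphism of finitely presented left R-modules such that α* = Hom_R(α, R) is surjective, α is injective; (6) every finitely presented left R-module is semireflexive; (7) every finitely presented left R-module embeds in an fp-flat left R-module; (8) every left R-module embeds in an fp-flat left R-module; (9) every FP-injective left R-module is fp-flat; (10) every injective left R-module is fp-flat; (11) every indecomposable injective left R-module is fp-flat; (12) every flat right R-module is fp-injective. -/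

import Mathlib

/-!
Common definitions: rings are associative with identity, not necessarily commutative.
Left `R`-modules are `Module R M`; right `R`-modules are `Module Rᵐᵒᵖ M`.
-/

universe u

open MulOpposite Function Pointwise

section Defs

variable (R : Type u) [Ring R]

/-- Defining relations of the tensor product `K ⊗_R M` of a right `R`-module `K`
and a left `R`-module `M`, inside the free abelian group on `K × M`. -/
def TensorRels (K M : Type u) [AddCommGroup K] [Module Rᵐᵒᵖ K]
    [AddCommGroup M] [Module R M] : AddSubgroup (FreeAbelianGroup (K × M)) :=
  AddSubgroup.closure
    ({x | ∃ k₁ k₂ m, x = FreeAbelianGroup.of (k₁ + k₂, m) - FreeAbelianGroup.of (k₁, m) -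
        FreeAbelianGroup.of (k₂, m)} ∪
     {x | ∃ k m₁ m₂, x = FreeAbelianGroup.of (k, m₁ + m₂) - FreeAbelianGroup.of (k, m₁) -
        FreeAbelianGroup.of (k, m₂)} ∪
     {x | ∃ (r : R) (k : K) (m : M),
        x = FreeAbelianGroup.of (op r • k, m) - FreeAbelianGroup.of (k, r • m)})

/-- The tensor product `K ⊗_R M` of a right `R`-module `K` and a left `R`-module `M`
over the (not necessarily commutative) ring `R`, as an abelian group. -/
def NCTensor (K M : Type u) [AddCommGroup K] [Module Rᵐᵒᵖ K]
    [AddCommGroup M] [Module R M] : Type u :=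
  FreeAbelianGroup (K × M) ⧸ TensorRels R K M

instance (K M : Type u) [AddCommGroup K] [Module Rᵐᵒᵖ K] [AddCommGroup M] [Module R M] :
    AddCommGroup (NCTensor R K M) :=
  QuotientAddGroup.Quotient.addCommGroup _

/-- The map `μ ⊗ ν : K ⊗_R M → K' ⊗_R M'` induced by a map `μ` of right `R`-modules
and a map `ν` of left `R`-modules. -/
def tensorCongr {K K' M M' : Type u} [AddCommGroup K] [Module Rᵐᵒᵖ K]
    [AddCommGroup K'] [Module Rᵐᵒᵖ K'] [AddCommGroup M] [Module R M]
    [AddCommGroup M'] [Module R M'] (μ : K →ₗ[Rᵐᵒᵖ] K') (ν : M →ₗ[R] M') :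
    NCTensor R K M →+ NCTensor R K' M' :=
  QuotientAddGroup.map (TensorRels R K M) (TensorRels R K' M')
    (FreeAbelianGroup.lift fun p : K × M => FreeAbelianGroup.of (μ p.1, ν p.2))
    (by
      refine (AddSubgroup.closure_le _).2 ?_
      rintro x ((⟨k₁, k₂, m, rfl⟩ | ⟨k, m₁, m₂, rfl⟩) | ⟨r, k, m, rfl⟩) <;>
        refine AddSubgroup.mem_comap.2 (AddSubgroup.subset_closure ?_)
      · exact Or.inl <| Or.inl ⟨μ k₁, μ k₂, ν m, by simp [map_add]⟩
      · exact Or.inl <| Or.inr ⟨μ k, ν m₁, ν m₂, by simp [map_add]⟩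
      · exact Or.inr ⟨r, μ k, ν m, by simp [map_smul]⟩)

/-- A left `R`-module `M` is flat if `μ ⊗ M` is injective for every injective
homomorphism `μ` of right `R`-modules. -/
def ModFlat (M : Type u) [AddCommGroup M] [Module R M] : Prop :=
  ∀ (K L : Type u) [AddCommGroup K] [Module Rᵐᵒᵖ K] [AddCommGroup L] [Module Rᵐᵒᵖ L]
    (μ : K →ₗ[Rᵐᵒᵖ] L), Injective μ →
      Injective (tensorCongr R μ (LinearMap.id : M →ₗ[R] M))

/-- A right `R`-module `M` is flat if `M ⊗ μ` is injective for every injective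
homomorphism `μ` of left `R`-modules. -/
def ModFlatRight (M : Type u) [AddCommGroup M] [Module Rᵐᵒᵖ M] : Prop :=
  ∀ (K L : Type u) [AddCommGroup K] [Module R K] [AddCommGroup L] [Module R L]
    (μ : K →ₗ[R] L), Injective μ →
      Injective (tensorCongr R (LinearMap.id : M →ₗ[Rᵐᵒᵖ] M) μ)

/-- A left `R`-module `M` is fp-flat if `μ ⊗ M` is injective for every injective
homomorphism `μ` of finitely presented right `R`-modules. -/
def FpFlat (M : Type u) [AddCommGroup M] [Module R M] : Prop :=
  ∀ (K L : Type u) [AddCommGroup K] [Module Rᵐᵒᵖ K] [AddCommGroup L] [Module Rᵐᵒᵖ L],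
    Module.FinitePresentation Rᵐᵒᵖ K → Module.FinitePresentation Rᵐᵒᵖ L →
    ∀ (μ : K →ₗ[Rᵐᵒᵖ] L), Injective μ →
      Injective (tensorCongr R μ (LinearMap.id : M →ₗ[R] M))

/-- A right `R`-module `M` is fp-flat if `M ⊗ μ` is injective for every injective
homomorphism `μ` of finitely presented left `R`-modules. -/
def FpFlatRight (M : Type u) [AddCommGroup M] [Module Rᵐᵒᵖ M] : Prop :=
  ∀ (K L : Type u) [AddCommGroup K] [Module R K] [AddCommGroup L] [Module R L],
    Module.FinitePresentation R K → Module.FinitePresentation R L →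
    ∀ (μ : K →ₗ[R] L), Injective μ →
      Injective (tensorCongr R (LinearMap.id : M →ₗ[Rᵐᵒᵖ] M) μ)

/-- `Ext¹_R(F, M) = 0`. -/
def ExtVanish (F M : Type u) [AddCommGroup F] [Module R F] [AddCommGroup M] [Module R M] :
    Prop :=
  Subsingleton
    (((Ext ℤ (ModuleCat.{u} R) 1).obj (Opposite.op (ModuleCat.of R F))).obj (ModuleCat.of R M))

/-- A left `R`-module `M` is FP-injective (absolutely pure) if `Ext¹_R(F, M) = 0` for
every finitely presented left `R`-module `F`. -/
def FPInjective (M : Type u) [AddCommGroup M] [Module R M] : Prop :=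
  ∀ (F : Type u) [AddCommGroup F] [Module R F], Module.FinitePresentation R F → ExtVanish R F M

/-- A left `R`-module `M` is fp-injective if for every injective homomorphism `μ : K → L`
of finitely presented left `R`-modules, the induced map `Hom(L, M) → Hom(K, M)` is
surjective. -/
def FpInjective (M : Type u) [AddCommGroup M] [Module R M] : Prop :=
  ∀ (K L : Type u) [AddCommGroup K] [Module R K] [AddCommGroup L] [Module R L],
    Module.FinitePresentation R K → Module.FinitePresentation R L →
    ∀ (μ : K →ₗ[R] L), Injective μ → ∀ f : K →ₗ[R] M, ∃ g : L →ₗ[R] M, g ∘ₗ μ = f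

/-- A left `R`-module `K` is an FP-cogenerator if for every nonzero homomorphism
`f : M → N` from a finitely generated module `M` to a finitely presented module `N`
there is `g : N → K` with `g ∘ f ≠ 0`. -/
def IsFPCogenerator (K : Type u) [AddCommGroup K] [Module R K] : Prop :=
  ∀ (M N : Type u) [AddCommGroup M] [Module R M] [AddCommGroup N] [Module R N],
    Module.Finite R M → Module.FinitePresentation R N →
    ∀ f : M →ₗ[R] N, f ≠ 0 → ∃ g : N →ₗ[R] K, g ∘ₗ f ≠ 0

/-- A left `R`-module `K` is a cogenerator if for every nonzero homomorphism `f : M → N`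
of left `R`-modules there is `g : N → K` with `g ∘ f ≠ 0`. -/
def IsCogenerator (K : Type u) [AddCommGroup K] [Module R K] : Prop :=
  ∀ (M N : Type u) [AddCommGroup M] [Module R M] [AddCommGroup N] [Module R N],
    ∀ f : M →ₗ[R] N, f ≠ 0 → ∃ g : N →ₗ[R] K, g ∘ₗ f ≠ 0

/-- The canonical evaluation map `M → M** = Hom(Hom(M, R), R)` for a left `R`-module `M`;
here `M* = Hom_R(M, R)` is a right `R`-module. -/
def dualEval (M : Type u) [AddCommGroup M] [Module R M] :
    M →ₗ[R] ((M →ₗ[R] R) →ₗ[Rᵐᵒᵖ] R) where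
  toFun m :=
    { toFun := fun f => f m
      map_add' := fun f g => rfl
      map_smul' := fun r f => rfl }
  map_add' m m' := LinearMap.ext fun f => f.map_add m m'
  map_smul' r m := LinearMap.ext fun f => by simp [f.map_smul]

/-- The canonical evaluation map `M → M** = Hom(Hom(M, R), R)` for a right `R`-module `M`;
here `M* = Hom_R(M, R)` is a left `R`-module. -/
def dualEvalRight (M : Type u) [AddCommGroup M] [Module Rᵐᵒᵖ M] :
    M →ₗ[Rᵐᵒᵖ] ((M →ₗ[Rᵐᵒᵖ] R) →ₗ[R] R) where
  toFun m :=
    { toFun := fun f => f m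
      map_add' := fun f g => rfl
      map_smul' := fun r f => rfl }
  map_add' m m' := LinearMap.ext fun f => f.map_add m m'
  map_smul' r m := LinearMap.ext fun f => by simp [f.map_smul]

/-- The left annihilator of a subset `X ⊆ R`. -/
def lAnn (X : Set R) : Set R := {a | ∀ x ∈ X, a * x = 0}

/-- The right annihilator of a subset `X ⊆ R`. -/
def rAnn (X : Set R) : Set R := {a | ∀ x ∈ X, x * a = 0}

/-- `R` is left coherent: every finitely generated left ideal is finitely presented. -/
def LeftCoherent : Prop :=
  ∀ I : Submodule R R, I.FG → Module.FinitePresentation R I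

/-- `R` is right coherent: every finitely generated right ideal is finitely presented. -/
def RightCoherent : Prop :=
  ∀ I : Submodule Rᵐᵒᵖ R, I.FG → Module.FinitePresentation Rᵐᵒᵖ I

/-- A left `R`-module `M` embeds in a free left `R`-module. -/
def EmbedsInFree (M : Type u) [AddCommGroup M] [Module R M] : Prop :=
  ∃ (ι : Type u) (f : M →ₗ[R] (ι →₀ R)), Injective f

/-- A right `R`-module `M` embeds in a free right `R`-module. -/
def EmbedsInFreeRight (M : Type u) [AddCommGroup M] [Module Rᵐᵒᵖ M] : Prop :=
  ∃ (ι : Type u) (f : M →ₗ[Rᵐᵒᵖ] (ι →₀ R)), Injective f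

/-- `R` is a left IF-ring: every finitely presented left `R`-module embeds in a free module. -/
def LeftIF : Prop :=
  ∀ (M : Type u) [AddCommGroup M] [Module R M],
    Module.FinitePresentation R M → EmbedsInFree R M

/-- `R` is a right IF-ring: every finitely presented right `R`-module embeds in a free module. -/
def RightIF : Prop :=
  ∀ (M : Type u) [AddCommGroup M] [Module Rᵐᵒᵖ M],
    Module.FinitePresentation Rᵐᵒᵖ M → EmbedsInFreeRight R M

/-- A module is cyclic if it is generated by one element. -/
def CyclicModule (M : Type u) [AddCommGroup M] [Module R M] : Prop :=
  ∃ m : M, Submodule.span R {m} = ⊤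

/-- `R` is a left CF-ring: every cyclic left `R`-module embeds in a free module. -/
def LeftCF : Prop :=
  ∀ (M : Type u) [AddCommGroup M] [Module R M], CyclicModule R M → EmbedsInFree R M

/-- `R` is a left FGF-ring: every finitely generated left `R`-module embeds in a free module. -/
def LeftFGF : Prop :=
  ∀ (M : Type u) [AddCommGroup M] [Module R M], Module.Finite R M → EmbedsInFree R M

/-- `R` is a left Kasch ring: `Hom_R(M, R) ≠ 0` for every nonzero cyclic left `R`-module. -/
def LeftKasch : Prop :=
  ∀ (M : Type u) [AddCommGroup M] [Module R M],
    CyclicModule R M → Nontrivial M → ∃ f : M →ₗ[R] R, f ≠ 0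

/-- `R` is a right Kasch ring: `Hom_R(M, R) ≠ 0` for every nonzero cyclic right `R`-module. -/
def RightKasch : Prop :=
  ∀ (M : Type u) [AddCommGroup M] [Module Rᵐᵒᵖ M],
    CyclicModule Rᵐᵒᵖ M → Nontrivial M → ∃ f : M →ₗ[Rᵐᵒᵖ] R, f ≠ 0

/-- The socle of a module: the sum of all its simple submodules. -/
def socle (M : Type u) [AddCommGroup M] [Module R M] : Submodule R M :=
  sSup {N : Submodule R M | IsSimpleModule R N}

/-- `R` is left semiartinian: every nonzero cyclic left `R`-module has a nonzero socle. -/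
def LeftSemiartinian : Prop :=
  ∀ (M : Type u) [AddCommGroup M] [Module R M],
    CyclicModule R M → Nontrivial M → socle R M ≠ ⊥

/-- A submodule `N ⊆ M` is essential if it meets every nonzero submodule nontrivially. -/
def EssentialSub {M : Type u} [AddCommGroup M] [Module R M] (N : Submodule R M) : Prop :=
  ∀ P : Submodule R M, P ≠ ⊥ → N ⊓ P ≠ ⊥

/-- `R` is semiregular: `R/rad R` is von Neumann regular,
where `rad R` is the Jacobson radical. -/
def Semiregular : Prop :=
  ∀ a : R, ∃ x : R, a - a * x * a ∈ Ideal.jacobson (⊥ : Ideal R)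

/-- `R` is semiperfect: `R/rad R` is semisimple and idempotents lift modulo `rad R`. -/
def Semiperfect : Prop :=
  IsSemisimpleModule R (R ⧸ Ideal.jacobson (⊥ : Ideal R)) ∧
    ∀ a : R, a * a - a ∈ Ideal.jacobson (⊥ : Ideal R) →
      ∃ e : R, e * e = e ∧ e - a ∈ Ideal.jacobson (⊥ : Ideal R)

/-- A module is indecomposable if it is nonzero and is not the direct sum of two
nonzero submodules. -/
def IndecModule (M : Type u) [AddCommGroup M] [Module R M] : Prop :=
  Nontrivial M ∧ ∀ A B : Submodule R M, IsCompl A B → A = ⊥ ∨ B = ⊥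

/-- `R` is weakly quasi-Frobenius: left and right coherent and left and right FP-injective. -/
def WQF : Prop :=
  LeftCoherent R ∧ RightCoherent R ∧ FPInjective R R ∧ FPInjective Rᵐᵒᵖ R

/-- `R` is quasi-Frobenius: left and right noetherian and left and right self-injective. -/
def QF : Prop :=
  IsNoetherianRing R ∧ IsNoetherian Rᵐᵒᵖ R ∧ Module.Injective R R ∧ Module.Injective Rᵐᵒᵖ R

end Defs

/-- A group is locally finite if every finitely generated subgroup is finite. -/
def LocallyFiniteGroup (G : Type*) [Group G] : Prop :=
  ∀ H : Subgroup G, H.FG → Finite H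

/-!
Everything reduces to semireflexivity of the finitely presented left modules: elements of such a
module `N` are separated by functionals `N → R`.

* If `R_R` is FP-injective, `E` is an FP-injective left module and `K` is a finitely presented right
  module, then the functionals `φ : K → R` separate the elements of `K ⊗ E` through the maps
  `φ ⊗ E : K ⊗ E → R ⊗ E ≅ E`; as functionals extend along a monomorphism `K → L`, so does
  injectivity, and `E` is fp-flat.
* If `F` is fp-flat and `v ∈ N` is killed by every functional on `N`, then it is killed by every
  homomorphism `N → F`. So `N` is semireflexive as soon as its nonzero elements are detected by
  homomorphisms to fp-flat modules, for instance to an fp-flat cogenerator, or to the injective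
  hulls of the simple modules, which are indecomposable.
* A matrix `A` presents a left module with rows as relations, and its columns generate a right
  submodule of a free module. Semireflexivity of the former is the solvability of `y A = g` for all
  `g` orthogonal to the solutions of `A x = 0`, that is, extension of functionals from the latter.
* For flat `M_R` and finitely presented `K_R` the canonical map `M ⊗ K* → Hom(K, M)` is onto, so
  extending homomorphisms to `M` reduces to extending functionals.
-/

section Extension

variable {S : Type*} [Ring S] {A B C M : Type*} [AddCommGroup A] [Module S A] [AddCommGroup B]
  [Module S B] [AddCommGroup C] [Module S C] [AddCommGroup M] [Module S M]

/-- Every homomorphism from the submodule `K` to `M` extends to the ambient module. -/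
def ExtendsFrom (K : Submodule S B) (M : Type*) [AddCommGroup M] [Module S M] : Prop :=
  ∀ f : K →ₗ[S] M, ∃ g : B →ₗ[S] M, g ∘ₗ K.subtype = f

lemma exists_comp_eq_of_surjective {q : A →ₗ[S] C} (hq : Surjective q) {f : A →ₗ[S] M}
    (h : LinearMap.ker q ≤ LinearMap.ker f) : ∃ g : C →ₗ[S] M, g ∘ₗ q = f := by
  refine ⟨(LinearMap.ker q).liftQ f h ∘ₗ (q.quotKerEquivOfSurjective hq).symm, ?_⟩
  ext a
  have ha : (q.quotKerEquivOfSurjective hq).symm (q a) = Submodule.Quotient.mk a :=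
    (LinearEquiv.symm_apply_eq _).2 rfl
  simp [ha]

lemma exists_comp_eq_of_extendsFrom_range {α : A →ₗ[S] B} (hα : ExtendsFrom (LinearMap.range α) M)
    {β : A →ₗ[S] M} (h : LinearMap.ker α ≤ LinearMap.ker β) : ∃ g : B →ₗ[S] M, g ∘ₗ α = β := by
  obtain ⟨f, hf⟩ := exists_comp_eq_of_surjective α.surjective_rangeRestrict
    (α.ker_rangeRestrict.trans_le h)
  obtain ⟨g, hg⟩ := hα f
  exact ⟨g, by rw [← hf, ← hg]; rfl⟩

lemma extendsFrom_range_iff_of_exact {d₂ : A →ₗ[S] B} {d₁ : B →ₗ[S] C} (h : Exact d₂ d₁) :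
    ExtendsFrom (LinearMap.range d₁) M ↔
      ∀ x : B →ₗ[S] M, x ∘ₗ d₂ = 0 → ∃ y : C →ₗ[S] M, y ∘ₗ d₁ = x := by
  constructor
  · intro hM x hx
    refine exists_comp_eq_of_extendsFrom_range hM ?_
    rw [h.linearMap_ker_eq]
    exact LinearMap.range_le_ker_iff.2 hx
  · intro hM f
    obtain ⟨y, hy⟩ := hM (f ∘ₗ d₁.rangeRestrict) (by
      have hd : d₁.rangeRestrict ∘ₗ d₂ = 0 :=
        LinearMap.ext fun a => Subtype.ext (h.apply_apply_eq_zero a)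
      rw [LinearMap.comp_assoc, hd, LinearMap.comp_zero])
    refine ⟨y, ?_⟩
    rw [← LinearMap.cancel_right d₁.surjective_rangeRestrict, ← hy]
    rfl

/-- Schanuel's argument: `B` is a quotient of `ker q ⊕ A`. -/
lemma ExtendsFrom.ker_of_projective [Module.Projective S A] {p : A →ₗ[S] C} {q : B →ₗ[S] C}
    (hp : Surjective p) (hq : Surjective q)
    (h : ExtendsFrom (LinearMap.ker p) M) :
    ExtendsFrom (LinearMap.ker q) M := by
  intro f
  obtain ⟨l, hl⟩ := Module.projective_lifting_property q p hq
  have hl' (x : A) : q (l x) = p x := LinearMap.congr_fun hl x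
  let l₀ : LinearMap.ker p →ₗ[S] LinearMap.ker q := l.restrict fun x hx => by
    rwa [LinearMap.mem_ker, hl']
  obtain ⟨g, hg⟩ := h (f ∘ₗ l₀)
  have hs : Surjective ((LinearMap.ker q).subtype.coprod l) := fun y => by
    obtain ⟨x, hx⟩ := hp (q y)
    exact ⟨(⟨y - l x, by simp [hl', hx]⟩, x), by simp⟩
  have hle : LinearMap.ker ((LinearMap.ker q).subtype.coprod l) ≤ LinearMap.ker (f.coprod g) := by
    rintro ⟨k, x⟩ hx
    have hkx : k.1 + l x = 0 := by simpa using hx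
    have hxp : x ∈ LinearMap.ker p := by
      rw [LinearMap.mem_ker, ← hl', eq_neg_of_add_eq_zero_right hkx]
      simp
    have hk : k = -l₀ ⟨x, hxp⟩ := Subtype.ext (eq_neg_of_add_eq_zero_left hkx)
    have hgx : g x = f (l₀ ⟨x, hxp⟩) := LinearMap.congr_fun hg ⟨x, hxp⟩
    simp [hgx, hk]
  obtain ⟨g', hg'⟩ := exists_comp_eq_of_surjective hs hle
  refine ⟨g', ?_⟩
  ext k
  simpa using LinearMap.congr_fun hg' (k, 0)

end Extension

section Ext

open CategoryTheory

variable {S : Type u} [Ring S]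

lemma exactAt_one_linearYonedaObj_iff (X : ChainComplex (ModuleCat.{u} S) ℕ)
    (M : ModuleCat.{u} S) :
    (X.linearYonedaObj ℤ M).ExactAt 1 ↔ ∀ x : X.X 1 →ₗ[S] M, x ∘ₗ (X.d 2 1).hom = 0 →
      ∃ y : X.X 0 →ₗ[S] M, y ∘ₗ (X.d 1 0).hom = x := by
  rw [HomologicalComplex.exactAt_iff' _ 0 1 2 (by simp) (by simp), ShortComplex.moduleCat_exact_iff]
  constructor
  · intro h x hx
    obtain ⟨y, hy⟩ := h (ModuleCat.ofHom x) (ModuleCat.hom_ext hx)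
    exact ⟨y.hom, congrArg ModuleCat.Hom.hom hy⟩
  · intro h x hx
    obtain ⟨y, hy⟩ := h x.hom (congrArg ModuleCat.Hom.hom hx)
    exact ⟨ModuleCat.ofHom y, ModuleCat.hom_ext hy⟩

variable {F L M : Type u} [AddCommGroup F] [Module S F] [AddCommGroup L] [Module S L]
  [AddCommGroup M] [Module S M]

lemma extVanish_iff_exactAt_one (P : ProjectiveResolution (ModuleCat.of S F)) :
    ExtVanish S F M ↔ (P.complex.linearYonedaObj ℤ (ModuleCat.of S M)).ExactAt 1 := by
  rw [HomologicalComplex.exactAt_iff_isZero_homology, ModuleCat.isZero_iff_subsingleton]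
  exact (P.isoExt 1 (ModuleCat.of S M)).toLinearEquiv.toEquiv.subsingleton_congr

lemma extVanish_iff_extendsFrom_ker_resolution (P : ProjectiveResolution (ModuleCat.of S F)) :
    ExtVanish S F M ↔ ExtendsFrom (LinearMap.ker (P.π.f 0).hom) M := by
  have h₁ : Exact (P.complex.d 2 1).hom (P.complex.d 1 0).hom :=
    (ShortComplex.ShortExact.moduleCat_exact_iff_function_exact _).1 (P.exact_succ 0)
  have h₀ : Exact (P.complex.d 1 0).hom (P.π.f 0).hom :=
    (ShortComplex.ShortExact.moduleCat_exact_iff_function_exact _).1 P.exact₀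
  rw [extVanish_iff_exactAt_one P, exactAt_one_linearYonedaObj_iff, h₀.linearMap_ker_eq,
    extendsFrom_range_iff_of_exact h₁]

lemma extVanish_iff_extendsFrom_ker [Module.Projective S L] {q : L →ₗ[S] F} (hq : Surjective q) :
    ExtVanish S F M ↔ ExtendsFrom (LinearMap.ker q) M := by
  let P : ProjectiveResolution (ModuleCat.of S F) := projectiveResolution _
  have : Module.Projective S (P.complex.X 0) :=
    (IsProjective.iff_projective (P.complex.X 0)).2 (P.projective 0)
  have hπ : Surjective (P.π.f 0).hom := (ModuleCat.epi_iff_surjective _).1 inferInstance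
  rw [extVanish_iff_extendsFrom_ker_resolution P]
  exact ⟨ExtendsFrom.ker_of_projective hπ hq, ExtendsFrom.ker_of_projective hq hπ⟩

lemma ExtVanish.extendsFrom_ker (h : ExtVanish S F M) {q : L →ₗ[S] F} (hq : Surjective q) :
    ExtendsFrom (LinearMap.ker q) M :=
  have hF := Finsupp.linearCombination_id_surjective S F
  ExtendsFrom.ker_of_projective hF hq ((extVanish_iff_extendsFrom_ker hF).1 h)

end Ext

section FPInjective

variable {S : Type u} [Ring S] {M : Type u} [AddCommGroup M] [Module S M]

lemma FPInjective.exists_comp_eq (hM : FPInjective S M) {X Y : Type u} [AddCommGroup X] [Module S X]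
    [Module.Finite S X] [AddCommGroup Y] [Module S Y] [Module.FinitePresentation S Y]
    {α : X →ₗ[S] Y} {β : X →ₗ[S] M} (h : LinearMap.ker α ≤ LinearMap.ker β) :
    ∃ g : Y →ₗ[S] M, g ∘ₗ α = β := by
  have hfp : Module.FinitePresentation S (Y ⧸ LinearMap.range α) :=
    Module.finitePresentation_of_surjective _ (LinearMap.range α).mkQ_surjective (by simp)
  have hα := (hM _ hfp).extendsFrom_ker (LinearMap.range α).mkQ_surjective
  rw [Submodule.ker_mkQ] at hα
  exact exists_comp_eq_of_extendsFrom_range hα h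

lemma FPInjective.of_extendsFrom
    (h : ∀ (n : ℕ) (K : Submodule S (Fin n → S)), K.FG → ExtendsFrom K M) : FPInjective S M := by
  intro F _ _ hF
  obtain ⟨n, q, hq⟩ := Module.Finite.exists_fin' S F
  exact (extVanish_iff_extendsFrom_ker hq).2 (h n _ (Module.FinitePresentation.fg_ker q hq))

lemma extendsFrom_of_injective (hM : Module.Injective S M) {B : Type u} [AddCommGroup B]
    [Module S B] (K : Submodule S B) : ExtendsFrom K M := fun f => by
  obtain ⟨g, hg⟩ := hM.out K.subtype K.injective_subtype f
  exact ⟨g, LinearMap.ext hg⟩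

lemma FPInjective.of_injective (hM : Module.Injective S M) : FPInjective S M :=
  .of_extendsFrom fun _ K _ => extendsFrom_of_injective hM K

lemma exists_pushout_of_ker_le {A B C : Type u} [AddCommGroup A] [Module S A] [Module.Finite S A]
    [AddCommGroup B] [Module S B] [Module.FinitePresentation S B] [AddCommGroup C] [Module S C]
    [Module.FinitePresentation S C] {α : A →ₗ[S] B} {β : A →ₗ[S] C}
    (h : LinearMap.ker α ≤ LinearMap.ker β) :
    ∃ (P : Type u) (_ : AddCommGroup P) (_ : Module S P) (_ : Module.FinitePresentation S P)
      (ι : C →ₗ[S] P) (κ : B →ₗ[S] P), Injective ι ∧ ι ∘ₗ β = κ ∘ₗ α := by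
  let N := LinearMap.range (β.prod (-α))
  have hN : N.FG := Module.Finite.iff_fg.1 inferInstance
  refine ⟨(C × B) ⧸ N, inferInstance, inferInstance,
    Module.finitePresentation_of_surjective _ N.mkQ_surjective (by simpa using hN),
    N.mkQ ∘ₗ .inl S C B, N.mkQ ∘ₗ .inr S C B, ?_, ?_⟩
  · rw [injective_iff_map_eq_zero]
    intro c hc
    obtain ⟨a, ha⟩ : (c, 0) ∈ N := by simpa using hc
    have hca : β a = c ∧ α a = 0 := by simpa using ha
    rw [← hca.1]
    exact h hca.2
  · ext a
    refine (Submodule.Quotient.eq N).2 ⟨a, ?_⟩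
    simp

lemma FpInjective.fpInjective_of_finitePresentation [Module.FinitePresentation S M]
    (hM : FpInjective S M) : FPInjective S M := by
  refine .of_extendsFrom fun n K hK f => ?_
  have : Module.Finite S K := Module.Finite.iff_fg.2 hK
  obtain ⟨P, _, _, _, ι, κ, hι, hικ⟩ :=
    exists_pushout_of_ker_le (α := K.subtype) (β := f) (by simp)
  obtain ⟨r, hr⟩ := hM M P inferInstance inferInstance ι hι LinearMap.id
  refine ⟨r ∘ₗ κ, ?_⟩
  rw [LinearMap.comp_assoc, ← hικ, ← LinearMap.comp_assoc, hr, LinearMap.id_comp]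

end FPInjective

section Presentation

/-- The map `x ↦ A x` on columns with entries in an `S`-module `X`, linear for any action of `T`
on `X` commuting with that of `S`. -/
def relationMap {S ι κ : Type*} [Ring S] [Fintype ι] (T X : Type*) [Ring T] [AddCommGroup X]
    [Module S X] [Module T X] [SMulCommClass T S X] (A : Matrix κ ι S) :
    (ι → X) →ₗ[T] (κ → X) where
  toFun x i := ∑ j, A i j • x j
  map_add' x y := by ext i; simp [Finset.sum_add_distrib]
  map_smul' t x := by ext i; simp [Finset.smul_sum, smul_comm t]

/-- The dual of the free cover of `N` given by the family `b`: a homomorphism `N → X` is sent to the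
column of its values on `b`. -/
def evalAt {S N ι : Type*} [Ring S] [AddCommGroup N] [Module S N] (T X : Type*) [Ring T]
    [AddCommGroup X] [Module S X] [Module T X] [SMulCommClass S T X] (b : ι → N) :
    (N →ₗ[S] X) →ₗ[T] (ι → X) where
  toFun f j := f (b j)
  map_add' _ _ := rfl
  map_smul' _ _ := rfl

/-- The family `b` generates `N`, with the rows of `A` as defining relations: the sequence
`S^κ → S^ι → N → 0` is exact. -/
structure IsPresentation {S N ι κ : Type*} [Ring S] [AddCommGroup N] [Module S N] [Fintype ι]
    [Fintype κ] (A : Matrix κ ι S) (b : ι → N) : Prop where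
  surjective : Surjective (Fintype.linearCombination S b)
  exact : Exact A.vecMulLinear (Fintype.linearCombination S b)

variable {S N ι κ : Type*} [Ring S] [AddCommGroup N] [Module S N]

@[simp]
lemma evalAt_apply {T X : Type*} [Ring T] [AddCommGroup X] [Module S X] [Module T X]
    [SMulCommClass S T X] (b : ι → N) (f : N →ₗ[S] X) (j : ι) : evalAt T X b f j = f (b j) := rfl

variable [Fintype ι]

@[simp]
lemma relationMap_apply {T X : Type*} [Ring T] [AddCommGroup X] [Module S X] [Module T X]
    [SMulCommClass T S X] (A : Matrix κ ι S) (x : ι → X) (i : κ) :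
    relationMap T X A x i = ∑ j, A i j • x j := rfl

variable (S N) in
lemma exists_isPresentation [Module.FinitePresentation S N] :
    ∃ (m n : ℕ) (A : Matrix (Fin n) (Fin m) S) (b : Fin m → N), IsPresentation A b := by
  obtain ⟨m, b, hb⟩ := Submodule.fg_iff_exists_fin_generating_family.1
    (Module.Finite.fg_top (R := S) (M := N))
  have hsurj : Surjective (Fintype.linearCombination S b) := by
    rw [← LinearMap.range_eq_top, Fintype.range_linearCombination, hb]
  obtain ⟨n, A, hA⟩ := Submodule.fg_iff_exists_fin_generating_family.1
    (Module.FinitePresentation.fg_ker _ hsurj)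
  refine ⟨m, n, Matrix.of A, b, hsurj, ?_⟩
  rw [LinearMap.exact_iff, ← hA, ← Fintype.range_linearCombination]
  congr 1
  ext i j
  simp

namespace IsPresentation

variable [Fintype κ] {A : Matrix κ ι S} {b : ι → N}

lemma exists_eq_sum (h : IsPresentation A b) (v : N) : ∃ g : ι → S, v = ∑ j, g j • b j := by
  obtain ⟨g, rfl⟩ := h.surjective v
  exact ⟨g, Fintype.linearCombination_apply S b g⟩

lemma sum_smul_eq_zero (h : IsPresentation A b) (i : κ) : ∑ j, A i j • b j = 0 := by
  classical
  simpa [Fintype.linearCombination_apply] using h.exact.apply_apply_eq_zero (Pi.single i 1)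

lemma hom_ext (h : IsPresentation A b) {X : Type*} [AddCommGroup X] [Module S X] {f f' : N →ₗ[S] X}
    (hf : ∀ j, f (b j) = f' (b j)) : f = f' := by
  ext v
  obtain ⟨g, rfl⟩ := h.exists_eq_sum v
  simp [hf]

lemma exists_hom (h : IsPresentation A b) {X : Type*} [AddCommGroup X] [Module S X] {x : ι → X}
    (hx : ∀ i, ∑ j, A i j • x j = 0) : ∃ f : N →ₗ[S] X, ∀ j, f (b j) = x j := by
  classical
  have hle : LinearMap.ker (Fintype.linearCombination S b) ≤
      LinearMap.ker (Fintype.linearCombination S x) := by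
    rw [h.exact.linearMap_ker_eq, LinearMap.range_le_ker_iff]
    ext i
    simpa [Fintype.linearCombination_apply] using hx i
  obtain ⟨f, hf⟩ := exists_comp_eq_of_surjective h.surjective hle
  refine ⟨f, fun j => ?_⟩
  simpa using LinearMap.congr_fun hf (Pi.single j 1)

lemma exact_evalAt (h : IsPresentation A b) (T X : Type*) [Ring T] [AddCommGroup X] [Module S X]
    [Module T X] [SMulCommClass S T X] [SMulCommClass T S X] :
    Exact (evalAt (S := S) T X b) (relationMap T X A) := by
  intro x
  rw [funext_iff]
  constructor
  · intro hx
    obtain ⟨f, hf⟩ := h.exists_hom hx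
    exact ⟨f, funext hf⟩
  · rintro ⟨f, rfl⟩ i
    simpa using congrArg f (h.sum_smul_eq_zero i)

end IsPresentation

end Presentation

section OppositeModule

variable (R : Type u) [Ring R]

/-- `R` as a right module over itself is the regular module of the opposite ring. -/
def opSelfEquiv : R ≃ₗ[Rᵐᵒᵖ] Rᵐᵒᵖ where
  toAddEquiv := opAddEquiv
  map_smul' _ _ := rfl

@[simp]
lemma opSelfEquiv_apply (r : R) : opSelfEquiv R r = op r := rfl

instance : Module.FinitePresentation Rᵐᵒᵖ R := .of_equiv (opSelfEquiv R).symm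

end OppositeModule

namespace NCTensor

variable {R : Type u} [Ring R] {K L M N P : Type u} [AddCommGroup K] [Module Rᵐᵒᵖ K]
  [AddCommGroup L] [Module Rᵐᵒᵖ L] [AddCommGroup M] [Module R M] [AddCommGroup N] [Module R N]
  [AddCommGroup P] [Module R P]

variable (R) in
/-- The pure tensor `k ⊗ m`. -/
def tmul (k : K) (m : M) : NCTensor R K M :=
  QuotientAddGroup.mk (s := TensorRels R K M) (FreeAbelianGroup.of (k, m))

lemma tmul_add_left (k₁ k₂ : K) (m : M) : tmul R (k₁ + k₂) m = tmul R k₁ m + tmul R k₂ m := by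
  rw [← sub_eq_zero, ← sub_sub]
  exact (QuotientAddGroup.eq_zero_iff (N := TensorRels R K M) _).2
    (AddSubgroup.subset_closure (Or.inl <| Or.inl ⟨_, _, _, rfl⟩))

lemma tmul_add_right (k : K) (m₁ m₂ : M) : tmul R k (m₁ + m₂) = tmul R k m₁ + tmul R k m₂ := by
  rw [← sub_eq_zero, ← sub_sub]
  exact (QuotientAddGroup.eq_zero_iff (N := TensorRels R K M) _).2
    (AddSubgroup.subset_closure (Or.inl <| Or.inr ⟨_, _, _, rfl⟩))

lemma tmul_op_smul (r : R) (k : K) (m : M) : tmul R (op r • k) m = tmul R k (r • m) := by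
  rw [← sub_eq_zero]
  exact (QuotientAddGroup.eq_zero_iff (N := TensorRels R K M) _).2
    (AddSubgroup.subset_closure (Or.inr ⟨_, _, _, rfl⟩))

variable (R K M) in
/-- The pure tensor `k ⊗ m` as a biadditive map. -/
def tmulHom : K →+ M →+ NCTensor R K M :=
  AddMonoidHom.mk' (fun k => AddMonoidHom.mk' (tmul R k) (tmul_add_right k))
    fun k₁ k₂ => AddMonoidHom.ext (tmul_add_left k₁ k₂)

lemma tmul_zero_left (m : M) : tmul R (0 : K) m = 0 :=
  DFunLike.congr_fun (map_zero (tmulHom R K M)) m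

lemma tmul_zero_right (k : K) : tmul R k (0 : M) = 0 := map_zero (tmulHom R K M k)

lemma tmul_neg_left (k : K) (m : M) : tmul R (-k) m = -tmul R k m :=
  DFunLike.congr_fun (map_neg (tmulHom R K M) k) m

lemma tmul_sum_left {ι : Type*} (s : Finset ι) (k : ι → K) (m : M) :
    tmul R (∑ i ∈ s, k i) m = ∑ i ∈ s, tmul R (k i) m :=
  map_sum ((tmulHom R K M).flip m) k s

lemma tmul_sum_right {ι : Type*} (s : Finset ι) (k : K) (m : ι → M) :
    tmul R k (∑ i ∈ s, m i) = ∑ i ∈ s, tmul R k (m i) :=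
  map_sum (tmulHom R K M k) m s

@[elab_as_elim]
lemma induction_on {p : NCTensor R K M → Prop} (t : NCTensor R K M) (zero : p 0)
    (tmul : ∀ k m, p (tmul R k m)) (add : ∀ s t, p s → p t → p (s + t)) : p t := by
  obtain ⟨x, rfl⟩ := QuotientAddGroup.mk_surjective (s := TensorRels R K M) t
  induction x using FreeAbelianGroup.induction_on with
  | zero => exact zero
  | of x => exact tmul x.1 x.2
  | neg x _ =>
    have h := tmul (-x.1) x.2
    rwa [tmul_neg_left] at h
  | add x y hx hy => exact add _ _ hx hy

@[simp]
lemma tensorCongr_tmul {K' M' : Type u} [AddCommGroup K'] [Module Rᵐᵒᵖ K'] [AddCommGroup M']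
    [Module R M'] (μ : K →ₗ[Rᵐᵒᵖ] K') (ν : M →ₗ[R] M') (k : K) (m : M) :
    tensorCongr R μ ν (tmul R k m) = tmul R (μ k) (ν m) :=
  congrArg (QuotientAddGroup.mk (s := TensorRels R K' M'))
    (FreeAbelianGroup.lift_apply_of (fun p : K × M => FreeAbelianGroup.of (μ p.1, ν p.2)) (k, m))

lemma hom_ext {G : Type*} [AddCommGroup G] {f g : NCTensor R K M →+ G}
    (h : ∀ k m, f (tmul R k m) = g (tmul R k m)) : f = g := by
  ext t
  induction t using induction_on with
  | zero => simp
  | tmul k m => exact h k m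
  | add s t hs ht => simp [hs, ht]

/-- The homomorphism out of `K ⊗ M` induced by a balanced biadditive map. -/
def lift {G : Type*} [AddCommGroup G] (f : K →+ M →+ G)
    (hf : ∀ (r : R) k m, f (op r • k) m = f k (r • m)) : NCTensor R K M →+ G :=
  QuotientAddGroup.lift (TensorRels R K M) (FreeAbelianGroup.lift fun p : K × M => f p.1 p.2) (by
    refine (AddSubgroup.closure_le _).2 ?_
    rintro x ((⟨k₁, k₂, m, rfl⟩ | ⟨k, m₁, m₂, rfl⟩) | ⟨r, k, m, rfl⟩)
    · simp
    · simp
    · simp [hf])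

@[simp]
lemma lift_tmul {G : Type*} [AddCommGroup G] (f : K →+ M →+ G) (hf) (k : K) (m : M) :
    lift (R := R) f hf (tmul R k m) = f k m :=
  FreeAbelianGroup.lift_apply_of (fun p : K × M => f p.1 p.2) (k, m)

lemma exists_eq_sum_tmul {ι : Type*} [Fintype ι] {k : ι → K}
    (hk : Surjective (Fintype.linearCombination Rᵐᵒᵖ k)) (t : NCTensor R K M) :
    ∃ e : ι → M, t = ∑ i, tmul R (k i) (e i) := by
  induction t using induction_on with
  | zero => exact ⟨0, by simp [tmul_zero_right]⟩
  | tmul x m =>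
    obtain ⟨c, rfl⟩ := hk x
    refine ⟨fun i => unop (c i) • m, ?_⟩
    simp only [Fintype.linearCombination_apply, tmul_sum_left, ← tmul_op_smul, op_unop]
  | add s t hs ht =>
    obtain ⟨e, rfl⟩ := hs
    obtain ⟨e', rfl⟩ := ht
    exact ⟨e + e', by simp [tmul_add_right, Finset.sum_add_distrib]⟩

/-- The homomorphism `k ⊗ m ↦ φ(k) m` given by a linear form `φ` on the left factor. -/
def contractLeft (M : Type u) [AddCommGroup M] [Module R M] (φ : K →ₗ[Rᵐᵒᵖ] R) :
    NCTensor R K M →+ M :=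
  lift ((smulAddHom R M).comp φ.toAddMonoidHom) fun r k m => by simp [mul_smul]

/-- The homomorphism `k ⊗ m ↦ k ψ(m)` given by a linear form `ψ` on the right factor. -/
def contractRight (K : Type u) [AddCommGroup K] [Module Rᵐᵒᵖ K] (ψ : M →ₗ[R] R) :
    NCTensor R K M →+ K :=
  lift ((smulAddHom Rᵐᵒᵖ K).flip.compl₂ (opAddEquiv.toAddMonoidHom.comp ψ.toAddMonoidHom))
    fun r k m => by simp [mul_smul]

@[simp]
lemma contractLeft_tmul (φ : K →ₗ[Rᵐᵒᵖ] R) (k : K) (m : M) :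
    contractLeft M φ (tmul R k m) = φ k • m := lift_tmul _ _ k m

@[simp]
lemma contractRight_tmul (ψ : M →ₗ[R] R) (k : K) (m : M) :
    contractRight K ψ (tmul R k m) = op (ψ m) • k := lift_tmul _ _ k m

lemma contractLeft_tensorCongr (φ : L →ₗ[Rᵐᵒᵖ] R) (μ : K →ₗ[Rᵐᵒᵖ] L) (ν : M →ₗ[R] N)
    (t : NCTensor R K M) :
    contractLeft N φ (tensorCongr R μ ν t) = ν (contractLeft M (φ ∘ₗ μ) t) :=
  DFunLike.congr_fun (hom_ext (f := (contractLeft N φ).comp (tensorCongr R μ ν))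
    (g := ν.toAddMonoidHom.comp (contractLeft M (φ ∘ₗ μ))) fun k m => by simp) t

lemma contractRight_tensorCongr (ψ : N →ₗ[R] R) (μ : K →ₗ[Rᵐᵒᵖ] L) (ν : M →ₗ[R] N)
    (t : NCTensor R K M) :
    contractRight L ψ (tensorCongr R μ ν t) = μ (contractRight K (ψ ∘ₗ ν) t) :=
  DFunLike.congr_fun (hom_ext (f := (contractRight L ψ).comp (tensorCongr R μ ν))
    (g := μ.toAddMonoidHom.comp (contractRight K (ψ ∘ₗ ν))) fun k m => by simp) t

lemma tensorCongr_id_comp (g : N →ₗ[R] P) (f : M →ₗ[R] N) (t : NCTensor R K M) :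
    tensorCongr R (LinearMap.id : K →ₗ[Rᵐᵒᵖ] K) (g ∘ₗ f) t =
      tensorCongr R LinearMap.id g (tensorCongr R LinearMap.id f t) :=
  DFunLike.congr_fun (hom_ext (g := (tensorCongr R LinearMap.id g).comp
    (tensorCongr R LinearMap.id f)) fun k m => by simp) t

lemma tmul_one_contractLeft_id (t : NCTensor R R M) :
    tmul R (1 : R) (contractLeft M LinearMap.id t) = t := by
  induction t using induction_on with
  | zero => simp [tmul_zero_right]
  | tmul r m => simp [← tmul_op_smul]
  | add s t hs ht => rw [map_add, tmul_add_right, hs, ht]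

lemma injective_contractLeft_id : Injective (contractLeft M (LinearMap.id : R →ₗ[Rᵐᵒᵖ] R)) :=
  LeftInverse.injective tmul_one_contractLeft_id

/-- Right exactness of `K ⊗ _`: modulo the image of `K ⊗ M`, the class of `k ⊗ n` depends only on
that of `n` modulo the range of `f`. -/
lemma mem_range_tensorCongr_of_mkQ (f : M →ₗ[R] N) {t : NCTensor R K N}
    (ht : tensorCongr R LinearMap.id (LinearMap.range f).mkQ t = 0) :
    t ∈ (tensorCongr R (LinearMap.id : K →ₗ[Rᵐᵒᵖ] K) f).range := by
  let I := (tensorCongr R (LinearMap.id : K →ₗ[Rᵐᵒᵖ] K) f).range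
  let c : N ⧸ LinearMap.range f →+ K →+ NCTensor R K N ⧸ I :=
    QuotientAddGroup.lift _ ((tmulHom R K N).flip.compr₂ (QuotientAddGroup.mk' I)) (by
      rintro _ ⟨m, rfl⟩
      ext k
      exact (QuotientAddGroup.eq_zero_iff _).2 ⟨tmul R k m, tensorCongr_tmul _ _ k m⟩)
  let s : NCTensor R K (N ⧸ LinearMap.range f) →+ NCTensor R K N ⧸ I := lift c.flip (by
    intro r k n
    obtain ⟨n, rfl⟩ := Submodule.Quotient.mk_surjective _ n
    exact congrArg (QuotientAddGroup.mk' I) (tmul_op_smul r k n))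
  have hs : s.comp (tensorCongr R LinearMap.id (LinearMap.range f).mkQ) = QuotientAddGroup.mk' I :=
    hom_ext fun k n => by
      rw [AddMonoidHom.comp_apply, tensorCongr_tmul]
      exact lift_tmul _ _ _ _
  change t ∈ I
  rw [← QuotientAddGroup.ker_mk' I, AddMonoidHom.mem_ker, ← hs, AddMonoidHom.comp_apply, ht,
    map_zero]

end NCTensor

section Flat

open NCTensor

variable {R : Type u} [Ring R] {K A B C : Type u} [AddCommGroup K] [Module Rᵐᵒᵖ K]
  [AddCommGroup A] [Module R A] [AddCommGroup B] [Module R B] [AddCommGroup C] [Module R C]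

lemma ModFlatRight.exists_tensorCongr_eq (hK : ModFlatRight R K) {f : A →ₗ[R] B} {g : B →ₗ[R] C}
    (hfg : Exact f g) {t : NCTensor R K B} (ht : tensorCongr R LinearMap.id g t = 0) :
    ∃ s, tensorCongr R (LinearMap.id : K →ₗ[Rᵐᵒᵖ] K) f s = t := by
  let g' : B ⧸ LinearMap.range f →ₗ[R] C := (LinearMap.range f).liftQ g
    (LinearMap.range_le_ker_iff.2 hfg.linearMap_comp_eq_zero)
  have hg' : Injective g' := by
    rw [← LinearMap.ker_eq_bot, Submodule.ker_liftQ_eq_bot]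
    exact hfg.linearMap_ker_eq.le
  refine mem_range_tensorCongr_of_mkQ f ((injective_iff_map_eq_zero _).1 (hK _ _ g' hg') _ ?_)
  rw [← tensorCongr_id_comp, Submodule.liftQ_mkQ, ht]

variable (R) in
lemma modFlatRight_self : ModFlatRight R R := by
  intro A B _ _ _ _ μ hμ
  refine Injective.of_comp (f := contractLeft B LinearMap.id) ?_
  have h : contractLeft B LinearMap.id ∘ tensorCongr R LinearMap.id μ =
      μ ∘ contractLeft A LinearMap.id := funext (contractLeft_tensorCongr _ _ μ)
  rw [h]
  exact hμ.comp injective_contractLeft_id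

end Flat

section Balance

namespace NCTensor

variable {R : Type u} [Ring R] {K M : Type u} [AddCommGroup K] [Module Rᵐᵒᵖ K] [AddCommGroup M]
  [Module R M] {ι κ : Type*} [Fintype ι] [DecidableEq ι] [Fintype κ] [DecidableEq κ]

lemma sum_tmul_relationMap_left (A : Matrix κ ι R) (f : (κ → R) →ₗ[Rᵐᵒᵖ] K) (m : ι → M) :
    ∑ j, tmul R (f (relationMap Rᵐᵒᵖ R A (Pi.single j 1))) (m j) =
      ∑ i, tmul R (f (Pi.single i 1)) (∑ j, A i j • m j) := by
  have hcol (j : ι) : relationMap Rᵐᵒᵖ R A (Pi.single j 1) =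
      ∑ i, op (A i j) • (Pi.single i 1 : κ → R) := by
    ext i
    simp [Pi.single_apply]
  simp only [hcol, map_sum, map_smul, tmul_sum_left, tmul_sum_right, tmul_op_smul]
  exact Finset.sum_comm

lemma sum_tmul_relationMap_right (B : Matrix κ ι Rᵐᵒᵖ) (k : ι → K) (g : (κ → R) →ₗ[R] M) :
    ∑ j, tmul R (k j) (g (relationMap R R B (Pi.single j 1))) =
      ∑ i, tmul R (∑ j, B i j • k j) (g (Pi.single i 1)) := by
  have hcol (j : ι) : relationMap R R B (Pi.single j 1) =
      ∑ i, unop (B i j) • (Pi.single i 1 : κ → R) := by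
    ext i
    simp [Pi.single_apply]
  simp only [hcol, map_sum, map_smul, tmul_sum_left, tmul_sum_right, ← tmul_op_smul, op_unop]
  exact Finset.sum_comm

end NCTensor

end Balance

section Core

open NCTensor

variable {R : Type u} [Ring R]

/-- With `v = ∑ gⱼ bⱼ` in a presentation `(A, b)` of `N`, the functional `x ↦ ∑ gⱼ xⱼ` vanishes on
`ker A`, so it embeds `R` into the pushout `P` of the two maps. In `P ⊗ F` the tensor
`∑ gⱼ ⊗ φ(bⱼ)` can be moved across `A`, where it meets the relations of `N`. -/
lemma FpFlat.apply_eq_zero_of_dual {F N : Type u} [AddCommGroup F] [Module R F] (hF : FpFlat R F)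
    [AddCommGroup N] [Module R N] [Module.FinitePresentation R N] (φ : N →ₗ[R] F) {v : N}
    (hv : ∀ f : N →ₗ[R] R, f v = 0) : φ v = 0 := by
  obtain ⟨m, n, A, b, hAb⟩ := exists_isPresentation R N
  obtain ⟨g, rfl⟩ := hAb.exists_eq_sum v
  let β : (Fin m → R) →ₗ[Rᵐᵒᵖ] R := ∑ j, g j • LinearMap.proj j
  have hker : LinearMap.ker (relationMap Rᵐᵒᵖ R A) ≤ LinearMap.ker β := by
    rw [(hAb.exact_evalAt Rᵐᵒᵖ R).linearMap_ker_eq]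
    rintro _ ⟨f, rfl⟩
    simpa [β] using hv f
  have hβ (j : Fin m) : β (Pi.single j 1) = g j := by simp [β, Pi.single_apply]
  obtain ⟨P, _, _, hP, i, k, hi, hik⟩ := exists_pushout_of_ker_le hker
  have hik' (x : Fin m → R) : i (β x) = k (relationMap Rᵐᵒᵖ R A x) := LinearMap.congr_fun hik x
  have ht : ∑ j, tmul R (g j) (φ (b j)) = 0 := by
    refine (injective_iff_map_eq_zero _).1 (hF R P inferInstance hP i hi) _ ?_
    simp only [map_sum, tensorCongr_tmul, LinearMap.id_apply, ← hβ, hik',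
      sum_tmul_relationMap_left A k]
    simp only [← map_smul, ← map_sum, hAb.sum_smul_eq_zero, map_zero, tmul_zero_right,
      Finset.sum_const_zero]
  simpa using congrArg (contractLeft F LinearMap.id) ht

/-- Writing `t = ∑ kᵢ ⊗ eᵢ` in generators of `K`, the hypothesis says that `x ↦ ∑ xᵢ eᵢ` vanishes on
the dual of `K`, so it factors through the transposed relations of `K`. -/
lemma eq_zero_of_contractLeft_eq_zero {K E : Type u} [AddCommGroup K] [Module Rᵐᵒᵖ K]
    [Module.FinitePresentation Rᵐᵒᵖ K] [AddCommGroup E] [Module R E] (hE : FPInjective R E)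
    {t : NCTensor R K E} (ht : ∀ φ : K →ₗ[Rᵐᵒᵖ] R, contractLeft E φ t = 0) : t = 0 := by
  obtain ⟨p, q, B, k, hBk⟩ := exists_isPresentation Rᵐᵒᵖ K
  obtain ⟨e, rfl⟩ := exists_eq_sum_tmul hBk.surjective t
  have hker : LinearMap.ker (relationMap R R B) ≤
      LinearMap.ker (Fintype.linearCombination R e) := by
    rw [(hBk.exact_evalAt R R).linearMap_ker_eq]
    rintro _ ⟨φ, rfl⟩
    simpa [Fintype.linearCombination_apply] using ht φ
  obtain ⟨g, hg⟩ := hE.exists_comp_eq hker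
  have he (i : Fin p) : e i = g (relationMap R R B (Pi.single i 1)) := by
    simpa using (LinearMap.congr_fun hg (Pi.single i 1)).symm
  simp only [he, sum_tmul_relationMap_right, hBk.sum_smul_eq_zero, tmul_zero_left,
    Finset.sum_const_zero]

lemma FPInjective.fpFlat (hR : FPInjective Rᵐᵒᵖ R) {E : Type u} [AddCommGroup E] [Module R E]
    (hE : FPInjective R E) : FpFlat R E := by
  intro K L _ _ _ _ hK hL μ hμ
  rw [injective_iff_map_eq_zero]
  intro t ht
  refine eq_zero_of_contractLeft_eq_zero hE fun φ => ?_
  obtain ⟨ψ, rfl⟩ := hR.exists_comp_eq (α := μ) (β := φ) (by simp [LinearMap.ker_eq_bot.2 hμ])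
  simpa [ht] using (contractLeft_tensorCongr ψ μ LinearMap.id t).symm

/-- The canonical map `M ⊗ K* → Hom(K, M)` for right modules `K` and `M`, where `K*` is the dual
left module of `K`. -/
def tensorDualHom (R K M : Type u) [Ring R] [AddCommGroup K] [Module Rᵐᵒᵖ K] [AddCommGroup M]
    [Module Rᵐᵒᵖ M] : NCTensor R M (K →ₗ[Rᵐᵒᵖ] R) →+ (K →ₗ[Rᵐᵒᵖ] M) :=
  lift
    (AddMonoidHom.mk' (fun x => AddMonoidHom.mk'
      (fun φ => LinearMap.toSpanSingleton Rᵐᵒᵖ M x ∘ₗ (opSelfEquiv R).toLinearMap ∘ₗ φ)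
      fun φ ψ => by ext; simp [add_smul]) fun x y => by ext; simp)
    fun r x φ => by ext; simp [mul_smul]

variable {K M : Type u} [AddCommGroup K] [Module Rᵐᵒᵖ K] [AddCommGroup M] [Module Rᵐᵒᵖ M]

@[simp]
lemma tensorDualHom_tmul_apply (x : M) (φ : K →ₗ[Rᵐᵒᵖ] R) (k : K) :
    tensorDualHom R K M (tmul R x φ) k = op (φ k) • x := by
  rw [tensorDualHom, lift_tmul]
  rfl

lemma tensorDualHom_apply (s : NCTensor R M (K →ₗ[Rᵐᵒᵖ] R)) (k : K) :
    tensorDualHom R K M s k = contractRight M (dualEvalRight R K k) s := by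
  induction s using NCTensor.induction_on with
  | zero => simp
  | tmul x φ => simp [dualEvalRight]
  | add s t hs ht => simp [hs, ht]

/-- Flatness lifts `∑ f(kᵢ) ⊗ εᵢ ∈ M ⊗ R^p` along the exact sequence `0 → K* → R^p → R^q` obtained
by dualizing a presentation of `K`. -/
lemma ModFlatRight.surjective_tensorDualHom [Module.FinitePresentation Rᵐᵒᵖ K]
    (hM : ModFlatRight R M) : Surjective (tensorDualHom R K M) := by
  intro f
  obtain ⟨p, q, B, k, hBk⟩ := exists_isPresentation Rᵐᵒᵖ K
  let t : NCTensor R M (Fin p → R) := ∑ i, tmul R (f (k i)) (Pi.single i 1)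
  have ht : tensorCongr R LinearMap.id (relationMap R R B) t = 0 := by
    have h := sum_tmul_relationMap_right B (fun i => f (k i)) LinearMap.id
    simp only [← map_smul, ← map_sum, hBk.sum_smul_eq_zero, map_zero, tmul_zero_left,
      Finset.sum_const_zero] at h
    simpa [t] using h
  obtain ⟨s, hs⟩ := hM.exists_tensorCongr_eq (hBk.exact_evalAt R R) ht
  refine ⟨s, hBk.hom_ext fun i => ?_⟩
  calc tensorDualHom R K M s (k i)
      = contractRight M (LinearMap.proj i ∘ₗ evalAt R R k) s := tensorDualHom_apply s (k i)
    _ = contractRight M (LinearMap.proj i) t := by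
      rw [← hs, contractRight_tensorCongr, LinearMap.id_apply]
    _ = f (k i) := by simp [t, Pi.single_apply, apply_ite op]

lemma FPInjective.fpInjective_of_modFlatRight (hR : FPInjective Rᵐᵒᵖ R)
    (hM : ModFlatRight R M) : FpInjective Rᵐᵒᵖ M := by
  intro K L _ _ _ _ hK hL μ hμ f
  obtain ⟨s, rfl⟩ := hM.surjective_tensorDualHom f
  induction s using NCTensor.induction_on with
  | zero => exact ⟨0, by simp⟩
  | tmul x φ =>
    obtain ⟨ψ, rfl⟩ := hR.exists_comp_eq (α := μ) (β := φ) (by simp [LinearMap.ker_eq_bot.2 hμ])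
    exact ⟨tensorDualHom R L M (tmul R x ψ), by ext k; simp⟩
  | add s t hs ht =>
    obtain ⟨g, hg⟩ := hs
    obtain ⟨g', hg'⟩ := ht
    exact ⟨g + g', by rw [LinearMap.add_comp, hg, hg', map_add]⟩

end Core

section ModularLattice

variable {α : Type*}

lemma exists_maximal_disjoint [CompleteLattice α] [IsCompactlyGenerated α] {a b : α}
    (h : Disjoint a b) : ∃ c, b ≤ c ∧ Maximal (Disjoint a) c := by
  refine zorn_le_nonempty₀ {c | Disjoint a c} (fun s hs hchain _ _ => ?_) b h
  exact ⟨sSup s, hchain.directedOn.disjoint_sSup_right.2 fun c hc => hs hc, fun _ => le_sSup⟩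

lemma eq_bot_of_maximal_disjoint [Lattice α] [BoundedOrder α] [IsModularLattice α] {s b c d : α}
    (hb : Maximal (Disjoint s) b) (hbc : Disjoint b c) (hsc : s ≤ c) (hdc : d ≤ c)
    (hsd : Disjoint s d) : d = ⊥ := by
  have hd : (d ⊔ b) ⊓ c = d := by rw [sup_inf_assoc_of_le b hdc, hbc.eq_bot, sup_bot_eq]
  have hsdb : Disjoint s (d ⊔ b) := disjoint_iff_inf_le.2 <|
    (le_inf inf_le_left ((le_inf inf_le_right (inf_le_left.trans hsc)).trans hd.le)).trans
      hsd.le_bot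
  exact eq_bot_iff.2 (hbc.le_bot.trans' (le_inf (le_sup_left.trans (hb.le_of_ge hsdb le_sup_right))
    hdc))

end ModularLattice

section Injective

variable {R : Type u} [Ring R] {E M N : Type u} [AddCommGroup E] [Module R E] [AddCommGroup M]
  [Module R M] [AddCommGroup N] [Module R N]

lemma exists_injective_embedding (R M : Type u) [Ring R] [AddCommGroup M] [Module R M] :
    ∃ (E : Type u) (_ : AddCommGroup E) (_ : Module R E), Module.Injective R E ∧
      ∃ f : M →ₗ[R] E, Injective f := by
  let J := CategoryTheory.Injective.under (ModuleCat.of R M)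
  have : CategoryTheory.Injective (ModuleCat.of R J) :=
    inferInstanceAs (CategoryTheory.Injective J)
  exact ⟨J, inferInstance, inferInstance, Module.injective_module_of_injective_object R J,
    (CategoryTheory.Injective.ι (ModuleCat.of R M)).hom,
    (ModuleCat.mono_iff_injective _).1 inferInstance⟩

lemma exists_apply_eq_of_injective (hE : Module.Injective R E) {x : N} {e : E}
    (h : LinearMap.ker (LinearMap.toSpanSingleton R N x) ≤
      LinearMap.ker (LinearMap.toSpanSingleton R E e)) : ∃ φ : N →ₗ[R] E, φ x = e := by
  obtain ⟨φ, hφ⟩ := exists_comp_eq_of_extendsFrom_range (extendsFrom_of_injective hE _) h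
  exact ⟨φ, by simpa using LinearMap.congr_fun hφ 1⟩

lemma exists_injective_isCogenerator (R : Type u) [Ring R] :
    ∃ (E : Type u) (_ : AddCommGroup E) (_ : Module R E),
      Module.Injective R E ∧ IsCogenerator R E := by
  obtain ⟨E, hE, hsep⟩ := CategoryTheory.Abelian.has_injective_coseparator _
    (ModuleCat.isSeparator.{u} R)
  have : CategoryTheory.Injective (ModuleCat.of R E) := hE
  refine ⟨E, inferInstance, inferInstance, Module.injective_module_of_injective_object R E,
    fun M N _ _ _ _ f hf => ?_⟩
  by_contra! h
  exact hf (ModuleCat.hom_ext_iff.1 ((CategoryTheory.Preadditive.isCoseparator_iff _).1 hsep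
    (ModuleCat.ofHom f) fun g => ModuleCat.hom_ext (h g.hom)))

/-- Extending the inclusion of `C` over `E ⧸ B` gives an endomorphism of `E` which is the identity
on `C` and kills `B`; maximality forces its image to be `C`. -/
lemma isCompl_of_maximal_disjoint (hE : Module.Injective R E) {B C : Submodule R E}
    (hB : Maximal (Disjoint C) B) (hC : Maximal (Disjoint B) C) : IsCompl B C := by
  have hker : LinearMap.ker (B.mkQ ∘ₗ C.subtype) ≤ LinearMap.ker C.subtype := by
    rw [LinearMap.ker_comp, B.ker_mkQ, Submodule.disjoint_iff_comap_eq_bot.1 hB.prop]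
    exact bot_le
  obtain ⟨h, hh⟩ := exists_comp_eq_of_extendsFrom_range (extendsFrom_of_injective hE _) hker
  let k : E →ₗ[R] E := h ∘ₗ B.mkQ
  have hkC (c : E) (hc : c ∈ C) : k c = c := LinearMap.congr_fun hh ⟨c, hc⟩
  have hkB (b : E) (hb : b ∈ B) : k b = 0 := by
    simp [k, (Submodule.Quotient.mk_eq_zero B).2 hb]
  have hcomap : B.comap k ≤ B := by
    refine hB.le_of_ge (Submodule.disjoint_def.2 fun c hc hkc => ?_) fun b hb => ?_
    · exact Submodule.disjoint_def.1 hC.prop c (hkC c hc ▸ hkc) hc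
    · simp [hkB b hb]
  have hrange : LinearMap.range k ≤ C := by
    refine hC.le_of_ge (Submodule.disjoint_def.2 ?_) fun c hc => ⟨c, hkC c hc⟩
    rintro _ hb ⟨e, rfl⟩
    exact hkB e (hcomap hb)
  have hke (e : E) : e - k e ∈ B :=
    hcomap (by simp [hkC _ (hrange (LinearMap.mem_range_self k e))])
  exact ⟨hC.prop, codisjoint_iff_le_sup.2 fun e _ =>
    Submodule.mem_sup.2 ⟨_, hke e, _, hrange (LinearMap.mem_range_self k e), sub_add_cancel e _⟩⟩

lemma injective_of_isCompl (hE : Module.Injective R E) {B C : Submodule R E} (h : IsCompl B C) :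
    Module.Injective R C where
  out X Y _ _ _ _ f hf g := by
    obtain ⟨g', hg'⟩ := hE.out f hf (C.subtype ∘ₗ g)
    exact ⟨C.projectionOnto B h.symm ∘ₗ g', fun x => by simp [hg']⟩

lemma indecModule_of_essentialSub {S : Submodule R M} (hS : IsAtom S) (hess : EssentialSub R S) :
    IndecModule R M := by
  have hle (P : Submodule R M) (hP : P ≠ ⊥) : S ≤ P :=
    hS.not_disjoint_iff_le.1 fun h => hess P hP h.eq_bot
  refine ⟨Submodule.nontrivial_iff R |>.1 ⟨S, ⊥, hS.1⟩, fun A B hAB => ?_⟩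
  by_contra! h
  exact hS.1 (le_bot_iff.1 (hAB.disjoint (hle A h.1) (hle B h.2)))

lemma exists_injective_essentialSub (hE : Module.Injective R E) (S : Submodule R E) :
    ∃ C : Submodule R E, S ≤ C ∧ Module.Injective R C ∧ EssentialSub R (S.submoduleOf C) := by
  obtain ⟨B, -, hB⟩ := exists_maximal_disjoint (disjoint_bot_right (a := S))
  obtain ⟨C, hSC, hC⟩ := exists_maximal_disjoint hB.prop.symm
  have hBC : Maximal (Disjoint C) B :=
    ⟨hC.prop.symm, fun D hD hBD => hB.le_of_ge (hD.mono_left hSC) hBD⟩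
  refine ⟨C, hSC, injective_of_isCompl hE (isCompl_of_maximal_disjoint hE hBC hC),
    fun P hP hSP => hP ?_⟩
  have hSP' : Disjoint S (P.map C.subtype) := by
    rw [Submodule.disjoint_def]
    rintro _ hs ⟨c, hc, rfl⟩
    exact congrArg C.subtype ((Submodule.mem_bot R).1 (hSP.le ⟨hs, hc⟩))
  refine Submodule.map_injective_of_injective C.injective_subtype ?_
  rw [Submodule.map_bot]
  exact eq_bot_of_maximal_disjoint hB hC.prop hSC (Submodule.map_subtype_le C P) hSP'

lemma exists_injective_indecModule_of_isSimpleModule (R T : Type u) [Ring R] [AddCommGroup T]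
    [Module R T] [IsSimpleModule R T] :
    ∃ (C : Type u) (_ : AddCommGroup C) (_ : Module R C), Module.Injective R C ∧ IndecModule R C ∧
      ∃ f : T →ₗ[R] C, Injective f := by
  obtain ⟨E, _, _, hE, f, hf⟩ := exists_injective_embedding R T
  obtain ⟨C, hC, hCinj, hess⟩ := exists_injective_essentialSub hE (LinearMap.range f)
  let f' : T →ₗ[R] C := f.codRestrict C fun t => hC (LinearMap.mem_range_self f t)
  have hf' : Injective f' := fun x y h => hf (congrArg Subtype.val h)
  have hatom : IsAtom ((LinearMap.range f).submoduleOf C) := by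
    have : IsSimpleModule R ((LinearMap.range f).submoduleOf C) :=
      .congr ((Submodule.submoduleOfEquivOfLe hC).trans (LinearEquiv.ofInjective f hf).symm)
    exact isSimpleModule_iff_isAtom.1 this
  exact ⟨C, inferInstance, inferInstance, hCinj, indecModule_of_essentialSub hatom hess, f', hf'⟩

lemma exists_injective_indecModule_apply_ne_zero {x : N} (hx : x ≠ 0) :
    ∃ (C : Type u) (_ : AddCommGroup C) (_ : Module R C), Module.Injective R C ∧ IndecModule R C ∧
      ∃ φ : N →ₗ[R] C, φ x ≠ 0 := by
  obtain ⟨I, hI, hle⟩ : ∃ I : Ideal R, I.IsMaximal ∧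
      LinearMap.ker (LinearMap.toSpanSingleton R N x) ≤ I :=
    Ideal.exists_le_maximal _ fun h => hx (by simpa using (Ideal.eq_top_iff_one _).1 h)
  have : IsSimpleModule R (R ⧸ I) := isSimpleModule_iff_isCoatom.2 hI.out
  obtain ⟨C, _, _, hC, hind, f, hf⟩ := exists_injective_indecModule_of_isSimpleModule R (R ⧸ I)
  obtain ⟨φ, hφ⟩ := exists_apply_eq_of_injective hC (x := x) (e := f (I.mkQ 1)) fun r hr => by
    have hrI : I.mkQ r = 0 := (Submodule.Quotient.mk_eq_zero I).2 (hle hr)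
    rw [LinearMap.mem_ker, LinearMap.toSpanSingleton_apply, ← map_smul, ← map_smul, smul_eq_mul,
      mul_one, hrI, map_zero]
  refine ⟨C, inferInstance, inferInstance, hC, hind, φ, fun h => hI.ne_top ?_⟩
  rw [Ideal.eq_top_iff_one, ← Submodule.Quotient.mk_eq_zero I, ← map_eq_zero_iff f hf]
  exact hφ ▸ h

end Injective

section Semireflexive

open Matrix

variable {R : Type u} [Ring R] {K N : Type u} [AddCommGroup K] [Module R K] [AddCommGroup N]
  [Module R N]

lemma injective_dualEval_iff :
    Injective (dualEval R N) ↔ ∀ v : N, (∀ f : N →ₗ[R] R, f v = 0) → v = 0 := by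
  simp only [injective_iff_map_eq_zero, LinearMap.ext_iff]
  rfl

lemma exists_vecMul_eq_of_injective_dualEval {ι κ : Type} [Fintype ι] [Fintype κ]
    {A : Matrix κ ι R} (hA : Injective (dualEval R ((ι → R) ⧸ LinearMap.range A.vecMulLinear)))
    {g : ι → R} (hg : ∀ x, A *ᵥ x = 0 → g ⬝ᵥ x = 0) : ∃ y, y ᵥ* A = g := by
  classical
  let q := (LinearMap.range A.vecMulLinear).mkQ
  suffices hq : q g = 0 from (Submodule.Quotient.mk_eq_zero _).1 hq
  refine injective_dualEval_iff.1 hA _ fun f => ?_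
  have hf (v : ι → R) : f (q v) = v ⬝ᵥ fun j => f (q (Pi.single j 1)) := by
    conv_lhs => rw [pi_eq_sum_univ' v]
    simp [dotProduct]
  refine (hf g).trans (hg _ (funext fun i => ?_))
  have hi : q (A.row i) = 0 := (Submodule.Quotient.mk_eq_zero _).2 ⟨Pi.single i 1, by simp⟩
  exact (hf (A.row i)).symm.trans (by rw [hi, map_zero, Pi.zero_apply])

/-- If `R^m ⧸ (rows of A)` is semireflexive, a functional on the right module generated by the
columns `aⱼ` of `A` takes on them the values `(y A)ⱼ` for some row `y`, which extends it. -/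
lemma FPInjective.of_injective_dualEval
    (h : ∀ (N : Type u) [AddCommGroup N] [Module R N], Module.FinitePresentation R N →
      Injective (dualEval R N)) : FPInjective Rᵐᵒᵖ R := by
  refine .of_extendsFrom fun n K hK f => ?_
  obtain ⟨m, a, rfl⟩ := Submodule.fg_iff_exists_fin_generating_family.1 hK
  let a' (j : Fin m) : Submodule.span Rᵐᵒᵖ (Set.range a) :=
    ⟨a j, Submodule.subset_span (Set.mem_range_self j)⟩
  let A : Matrix (Fin n) (Fin m) R := fun i j => unop (a j i)
  have hA : Module.FinitePresentation R ((Fin m → R) ⧸ LinearMap.range A.vecMulLinear) :=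
    Module.finitePresentation_of_surjective _ (Submodule.mkQ_surjective _) (by simp)
  obtain ⟨y, hy⟩ : ∃ y, y ᵥ* A = fun j => f (a' j) := by
    refine exists_vecMul_eq_of_injective_dualEval (h _ hA) fun x hx => ?_
    have hsum : ∑ j, op (x j) • a' j = 0 := by
      ext i
      refine unop_injective ?_
      simpa [a', A, mulVec, dotProduct] using congrFun hx i
    simpa [dotProduct] using congrArg f hsum
  refine ⟨Fintype.linearCombination Rᵐᵒᵖ y, LinearMap.ext_on Submodule.span_span_coe_preimage ?_⟩
  rintro ⟨_, _⟩ ⟨j, rfl⟩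
  simpa [Fintype.linearCombination_apply, vecMul, dotProduct, A] using congrFun hy j

lemma IsFPCogenerator.exists_apply_ne_zero [hN : Module.FinitePresentation R N]
    (hK : IsFPCogenerator R K) {v : N} (hv : v ≠ 0) : ∃ φ : N →ₗ[R] K, φ v ≠ 0 := by
  obtain ⟨φ, hφ⟩ := hK R N inferInstance hN (LinearMap.toSpanSingleton R N v) fun h =>
    hv (by simpa using LinearMap.congr_fun h 1)
  exact ⟨φ, fun h => hφ (LinearMap.ext_ring (by simpa using h))⟩

lemma IsCogenerator.isFPCogenerator (hK : IsCogenerator R K) : IsFPCogenerator R K :=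
  fun M N _ _ _ _ _ _ f hf => hK M N f hf

lemma FpFlat.injective_dualEval_of_injective [Module.FinitePresentation R N] (hK : FpFlat R K)
    {f : N →ₗ[R] K} (hf : Injective f) : Injective (dualEval R N) :=
  injective_dualEval_iff.2 fun _ hv =>
    (map_eq_zero_iff f hf).1 (hK.apply_eq_zero_of_dual f hv)

lemma FpFlat.injective_dualEval_of_isFPCogenerator [Module.FinitePresentation R N]
    (hK : FpFlat R K) (hcog : IsFPCogenerator R K) : Injective (dualEval R N) := by
  refine injective_dualEval_iff.2 fun v hv => ?_
  by_contra hv0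
  obtain ⟨φ, hφ⟩ := hcog.exists_apply_ne_zero hv0
  exact hφ (hK.apply_eq_zero_of_dual φ hv)

lemma injective_dualEval_of_fpFlat_of_indecModule [Module.FinitePresentation R N]
    (h : ∀ (E : Type u) [AddCommGroup E] [Module R E],
      Module.Injective R E → IndecModule R E → FpFlat R E) : Injective (dualEval R N) := by
  refine injective_dualEval_iff.2 fun v hv => ?_
  by_contra hv0
  obtain ⟨E, _, _, hE, hind, φ, hφ⟩ :=
    exists_injective_indecModule_apply_ne_zero (R := R) hv0
  exact hφ ((h E hE hind).apply_eq_zero_of_dual φ hv)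

lemma isFPCogenerator_self_iff : IsFPCogenerator R R ↔
    ∀ (N : Type u) [AddCommGroup N] [Module R N], Module.FinitePresentation R N →
      Injective (dualEval R N) := by
  constructor
  · refine fun h N _ _ _ => injective_dualEval_iff.2 fun v hv => ?_
    by_contra hv0
    obtain ⟨φ, hφ⟩ := h.exists_apply_ne_zero hv0
    exact hφ (hv φ)
  · intro h M N _ _ _ _ _ hN f hf
    by_contra! hc
    exact hf (LinearMap.ext fun m =>
      injective_dualEval_iff.1 (h N hN) (f m) fun g => LinearMap.congr_fun (hc g) m)

lemma injective_of_surjective_dual {α : K →ₗ[R] N} (hK : Injective (dualEval R K))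
    (hα : Surjective fun f : N →ₗ[R] R => f ∘ₗ α) : Injective α := by
  refine (injective_iff_map_eq_zero α).2 fun v hv => injective_dualEval_iff.1 hK v fun f => ?_
  obtain ⟨g, rfl⟩ := hα f
  simp [hv]

lemma injective_dualEval_of_surjective_dual [Module.FinitePresentation R N]
    (h : ∀ (Q : Type u) [AddCommGroup Q] [Module R Q], Module.FinitePresentation R Q →
      ∀ α : N →ₗ[R] Q, Surjective (fun f : Q →ₗ[R] R => f ∘ₗ α) → Injective α) :
    Injective (dualEval R N) := by
  refine injective_dualEval_iff.2 fun v hv => ?_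
  let V := Submodule.span R {v}
  have hQ : Module.FinitePresentation R (N ⧸ V) :=
    Module.finitePresentation_of_surjective V.mkQ V.mkQ_surjective
      (by simpa [V] using Submodule.fg_span_singleton v)
  have hinj : Injective V.mkQ :=
    h (N ⧸ V) hQ V.mkQ fun f => ⟨Submodule.liftQSpanSingleton v f (hv f), by ext; simp [V]⟩
  exact (map_eq_zero_iff V.mkQ hinj).1
    ((Submodule.Quotient.mk_eq_zero V).2 (Submodule.mem_span_singleton_self v))

end Semireflexive

/-- Theorem 2.2: characterizations of right FP-injective rings. -/
theorem stmt_2 (R : Type u) [Ring R] :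
    List.TFAE
      [FPInjective Rᵐᵒᵖ R,
       IsFPCogenerator R R,
       ∃ (K : Type u) (_ : AddCommGroup K) (_ : Module R K), FpFlat R K ∧ IsFPCogenerator R K,
       ∃ (K : Type u) (_ : AddCommGroup K) (_ : Module R K), FpFlat R K ∧ IsCogenerator R K,
       ∀ (M N : Type u) [AddCommGroup M] [Module R M] [AddCommGroup N] [Module R N],
         Module.FinitePresentation R M → Module.FinitePresentation R N →
         ∀ α : M →ₗ[R] N, Surjective (fun f : N →ₗ[R] R => f ∘ₗ α) → Injective α,
       ∀ (M : Type u) [AddCommGroup M] [Module R M], Module.FinitePresentation R M →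
         Injective (dualEval R M),
       ∀ (M : Type u) [AddCommGroup M] [Module R M], Module.FinitePresentation R M →
         ∃ (F : Type u) (_ : AddCommGroup F) (_ : Module R F),
           FpFlat R F ∧ ∃ f : M →ₗ[R] F, Injective f,
       ∀ (M : Type u) [AddCommGroup M] [Module R M],
         ∃ (F : Type u) (_ : AddCommGroup F) (_ : Module R F),
           FpFlat R F ∧ ∃ f : M →ₗ[R] F, Injective f,
       ∀ (M : Type u) [AddCommGroup M] [Module R M], FPInjective R M → FpFlat R M,
       ∀ (M : Type u) [AddCommGroup M] [Module R M], Module.Injective R M → FpFlat R M,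
       ∀ (M : Type u) [AddCommGroup M] [Module R M],
         Module.Injective R M → IndecModule R M → FpFlat R M,
       ∀ (M : Type u) [AddCommGroup M] [Module Rᵐᵒᵖ M], ModFlatRight R M →
         FpInjective Rᵐᵒᵖ M] := by
  tfae_have 1 → 9 := fun h M _ _ hM => h.fpFlat hM
  tfae_have 9 → 10 := fun h M _ _ hM => h M (.of_injective hM)
  tfae_have 10 → 8 := fun h M _ _ =>
    (exists_injective_embedding R M).imp fun E ⟨_, _, hE, hf⟩ => ⟨_, _, h E hE, hf⟩
  tfae_have 8 → 7 := fun h M _ _ _ => h M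
  tfae_have 7 → 6 := fun h N _ _ hN =>
    let ⟨_, _, _, hF, _, hf⟩ := h N hN
    hF.injective_dualEval_of_injective hf
  tfae_have 6 → 1 := .of_injective_dualEval
  tfae_have 10 → 4 := fun h =>
    (exists_injective_isCogenerator R).imp fun E ⟨_, _, hE, hcog⟩ => ⟨_, _, h E hE, hcog⟩
  tfae_have 4 → 3 := fun ⟨K, _, _, hK, hcog⟩ => ⟨K, _, _, hK, hcog.isFPCogenerator⟩
  tfae_have 3 → 6 := fun ⟨_, _, _, hK, hcog⟩ _ _ _ _ =>
    hK.injective_dualEval_of_isFPCogenerator hcog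
  tfae_have 10 → 11 := fun h M _ _ hM _ => h M hM
  tfae_have 11 → 6 := fun h _ _ _ _ => injective_dualEval_of_fpFlat_of_indecModule h
  tfae_have 2 ↔ 6 := isFPCogenerator_self_iff
  tfae_have 6 → 5 := fun h M _ _ _ _ _ hM _ _ => injective_of_surjective_dual (h M hM)
  tfae_have 5 → 6 := fun h N _ _ hN =>
    injective_dualEval_of_surjective_dual fun Q _ _ hQ => h N Q hN hQ
  tfae_have 1 → 12 := fun h M _ _ => h.fpInjective_of_modFlatRight
  tfae_have 12 → 1 := fun h => (h R (modFlatRight_self R)).fpInjective_of_finitePresentation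
  tfae_finish
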